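/- Let (E, λ) be a training set and T a reasonable decision tree for (E, λ). If T' is obtained from T by a single subtree replacement operation, then T' is again a reasonable decision tree for (E, λ) and the number of errors of T' on (E, λ) is at least the number of errors of T on (E, λ). Consequently, if T' is obtained from a reasonable tree T by any sequence of subtree replacement operations, the number of errors of T' is at least that of T. -/

import Mathlib

/-- The two class labels. -/
inductive Label where
  | blue
  | red
deriving DecidableEq

/-- A decision tree over examples `ι → ℝ` with classes `{blue, red}`:
every inner node carries a feature and a threshold, every leaf a class label.
An example goes to the left child if its value in the node's feature is at most
the threshold, and to the right child otherwise. -/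
inductive DTree (ι : Type) where
  | leaf (c : Label)
  | node (feat : ι) (thr : ℝ) (left right : DTree ι)

namespace DTree

variable {ι : Type}

/-- The class that a decision tree assigns to an example. -/
noncomputable def classify : DTree ι → (ι → ℝ) → Label
  | .leaf c, _ => c
  | .node f t l r, e => if e f ≤ t then l.classify e else r.classify e

/-- The routing path of an example (`false` = left child, `true` = right child);
it is the position of the leaf of the example. -/
noncomputable def route : DTree ι → (ι → ℝ) → List Bool
  | .leaf _, _ => []
  | .node f t l r, e => if e f ≤ t then false :: l.route e else true :: r.route e

/-- The subtree rooted at a position (`none` if the position is not a node). -/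
def subtreeAt : DTree ι → List Bool → Option (DTree ι)
  | T, [] => some T
  | .leaf _, _ :: _ => none
  | .node _ _ l r, b :: p => (if b then r else l).subtreeAt p

/-- Replace the subtree at a given position by another tree. -/
def replaceAt : DTree ι → List Bool → DTree ι → DTree ι
  | _, [], T' => T'
  | .leaf c, _ :: _, _ => .leaf c
  | .node f t l r, b :: p, T' =>
      if b then .node f t l (r.replaceAt p T') else .node f t (l.replaceAt p T') r

/-- The number of inner nodes of a decision tree. -/
def innerCount : DTree ι → ℕ
  | .leaf _ => 0
  | .node _ _ l r => 1 + l.innerCount + r.innerCount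

/-- The position `p` is an inner node of `T`. -/
def IsInnerPos (T : DTree ι) (p : List Bool) : Prop :=
  ∃ f t l r, T.subtreeAt p = some (.node f t l r)

/-- The position `p` is a node of `T`. -/
def IsNodePos (T : DTree ι) (p : List Bool) : Prop :=
  (T.subtreeAt p).isSome

/-- The feature and threshold of the inner node at position `p`. -/
def cutAt (T : DTree ι) (p : List Bool) : Option (ι × ℝ) :=
  match T.subtreeAt p with
  | some (.node f t _ _) => some (f, t)
  | _ => none

/-- The subtree raising operation at position `q` keeping the child in direction `b`:
the subtree rooted at `q` is replaced by the subtree rooted at its `b`-child; it prunes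
the node at `q` together with all inner nodes of the subtree rooted at the other child. -/
def raiseAt (T : DTree ι) (q : List Bool) (b : Bool) : DTree ι :=
  match T.subtreeAt q with
  | some (.node _ _ l r) => T.replaceAt q (if b then r else l)
  | _ => T

end DTree

/-- `E[T,p]`: the examples of `E` whose routing through `T` passes the position `p`. -/
noncomputable def reach {ι : Type} (E : Finset (ι → ℝ)) (T : DTree ι) (p : List Bool) :
    Finset (ι → ℝ) :=
  E.filter fun e => p <+: T.route e

/-- The number of errors of `T` on the training set `(E, lab)`. -/
noncomputable def errCount {ι : Type} (T : DTree ι) (E : Finset (ι → ℝ))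
    (lab : (ι → ℝ) → Label) : ℕ :=
  (E.filter fun e => T.classify e ≠ lab e).card

/-- A most frequent label of the labeled set `(E, lab)` (blue in case of a tie). -/
def majorityLabel {ι : Type} (E : Finset (ι → ℝ)) (lab : (ι → ℝ) → Label) : Label :=
  if (E.filter fun e => lab e = Label.red).card ≤ (E.filter fun e => lab e = Label.blue).card
  then Label.blue else Label.red

/-- One subtree replacement operation: some inner node of `T` is replaced by a leaf
labeled with a most frequent label of the examples reaching it. -/
def ReplStep {ι : Type} (E : Finset (ι → ℝ)) (lab : (ι → ℝ) → Label)
    (T T' : DTree ι) : Prop :=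
  ∃ p, T.IsInnerPos p ∧
    T' = T.replaceAt p (.leaf (majorityLabel (reach E T p) lab))

/-- `T` is a reasonable decision tree for `(E, lab)`: every node is reached by some
example and every leaf carries a most frequent label of the examples reaching it. -/
def Reasonable {ι : Type} (E : Finset (ι → ℝ)) (lab : (ι → ℝ) → Label)
    (T : DTree ι) : Prop :=
  (∀ p, T.IsNodePos p → (reach E T p).Nonempty) ∧
  (∀ p c, T.subtreeAt p = some (.leaf c) → ∀ c' : Label,
    ((reach E T p).filter fun e => lab e = c').card ≤
      ((reach E T p).filter fun e => lab e = c).card)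

/-- Apply a sequence of raising operations (given by positions and kept directions). -/
def applySeq {ι : Type} : DTree ι → List (List Bool × Bool) → DTree ι
  | T, [] => T
  | T, (q, b) :: rest => applySeq (T.raiseAt q b) rest

/-- Each raising operation of the sequence is applied at an inner node. -/
def ValidSeq {ι : Type} : DTree ι → List (List Bool × Bool) → Prop
  | _, [] => True
  | T, (q, b) :: rest => T.IsInnerPos q ∧ ValidSeq (T.raiseAt q b) rest

/-- The total number of inner nodes pruned by a sequence of raising operations. -/
def seqPruned {ι : Type} : DTree ι → List (List Bool × Bool) → ℕ
  | _, [] => 0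
  | T, (q, b) :: rest =>
      (match T.subtreeAt q with
        | some (.node _ _ l r) => 1 + DTree.innerCount (if b then l else r)
        | _ => 0) + seqPruned (T.raiseAt q b) rest

/-- `T'` is obtained from `T` by a (possibly empty) sequence of subtree raising
operations. -/
def RaisedFrom {ι : Type} (T T' : DTree ι) : Prop :=
  ∃ steps, ValidSeq T steps ∧ applySeq T steps = T'

/-- `T'` is obtained from `T` by a sequence of subtree raising operations pruning
exactly `m` inner nodes in total. -/
def RaisedFromPruning {ι : Type} (T : DTree ι) (m : ℕ) (T' : DTree ι) : Prop :=
  ∃ steps, ValidSeq T steps ∧ seqPruned T steps = m ∧ applySeq T steps = T'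

/-- Tracking the position of a node through one raising operation: nodes strictly
below the raised node on the discarded side, and the raised node itself, are pruned
(`none`); all other nodes survive at a possibly shifted position. -/
def stepMap (q : List Bool) (b : Bool) (p : List Bool) : Option (List Bool) :=
  if q <+: p then
    if q ++ [b] <+: p then some (q ++ p.drop (q.length + 1)) else none
  else some p

/-- Tracking the position of a node through a sequence of raising operations. -/
def seqMap : List (List Bool × Bool) → List Bool → Option (List Bool)
  | [], p => some p
  | (q, b) :: rest, p => (stepMap q b p).bind (seqMap rest)

/-- The number of errors of `T` on a multiset of labeled examples. -/
noncomputable def errCountM {ι : Type} (T : DTree ι) (E : Multiset ((ι → ℝ) × Label)) : ℕ :=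
  (E.filter fun q => T.classify q.1 ≠ q.2).card

/-!
Both the number of errors and the two conditions defining a reasonable tree split along the root:
the examples are divided between the two children, and each child is treated on its own share.
The heart of the matter is that a tree all of whose leaves carry a most frequent label makes no
more errors than any constant classifier: this is clear at each leaf, and adds up over the leaves.
Applied to the subtree that is replaced, it shows that the replacement cannot remove errors, as
nothing changes for the examples that do not reach this subtree.
-/

section Replacement

open DTree

variable {ι : Type} {E : Finset (ι → ℝ)} {lab : (ι → ℝ) → Label} {T T' : DTree ι}

/-- `c` is a most frequent label of the labeled set `(E, lab)`. Ties are allowed, and every label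
is most frequent when `E` is empty. -/
def IsMostFrequent (E : Finset (ι → ℝ)) (lab : (ι → ℝ) → Label) (c : Label) : Prop :=
  ∀ c' : Label, (E.filter fun e ↦ lab e = c').card ≤ (E.filter fun e ↦ lab e = c).card

/-- Every node of `T` is reached by some example of `E`: the first condition in the definition of
a reasonable tree. -/
def FullyReached (E : Finset (ι → ℝ)) (T : DTree ι) : Prop :=
  ∀ p, T.IsNodePos p → (reach E T p).Nonempty

/-- Every leaf of `T` carries a most frequent label of the examples reaching it: the second
condition in the definition of a reasonable tree. -/
def MajorityLabeled (E : Finset (ι → ℝ)) (lab : (ι → ℝ) → Label) (T : DTree ι) : Prop :=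
  ∀ p c, T.subtreeAt p = some (.leaf c) → IsMostFrequent (reach E T p) lab c

theorem isMostFrequent_majorityLabel (E : Finset (ι → ℝ)) (lab : (ι → ℝ) → Label) :
    IsMostFrequent E lab (majorityLabel E lab) := by
  intro c
  unfold majorityLabel
  split_ifs <;> cases c <;> omega

theorem reach_nil (E : Finset (ι → ℝ)) (T : DTree ι) : reach E T [] = E := by
  simp [reach]

theorem reach_node_false (E : Finset (ι → ℝ)) (f : ι) (t : ℝ) (l r : DTree ι) (p : List Bool) :
    reach E (.node f t l r) (false :: p) = reach (E.filter fun e ↦ e f ≤ t) l p := by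
  ext e
  simp only [reach, Finset.mem_filter]
  by_cases h : e f ≤ t <;> simp [route, h]

theorem reach_node_true (E : Finset (ι → ℝ)) (f : ι) (t : ℝ) (l r : DTree ι) (p : List Bool) :
    reach E (.node f t l r) (true :: p) = reach (E.filter fun e ↦ ¬ e f ≤ t) r p := by
  ext e
  simp only [reach, Finset.mem_filter]
  by_cases h : e f ≤ t <;> simp [route, h, -not_le]

theorem forall_list_bool_iff {P : List Bool → Prop} :
    (∀ p, P p) ↔ P [] ∧ (∀ p, P (false :: p)) ∧ ∀ p, P (true :: p) := by
  refine ⟨fun h ↦ ⟨h _, fun _ ↦ h _, fun _ ↦ h _⟩, ?_⟩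
  rintro ⟨hnil, hfalse, htrue⟩ (_ | ⟨_ | _, p⟩)
  exacts [hnil, hfalse p, htrue p]

theorem fullyReached_leaf_iff {c : Label} : FullyReached E (.leaf c) ↔ E.Nonempty := by
  simp [FullyReached, forall_list_bool_iff, IsNodePos, subtreeAt, reach_nil]

theorem FullyReached.nonempty (h : FullyReached E T) : E.Nonempty := by
  simpa only [reach_nil] using h [] rfl

theorem fullyReached_node_iff {f : ι} {t : ℝ} {l r : DTree ι} :
    FullyReached E (.node f t l r) ↔
      FullyReached (E.filter fun e ↦ e f ≤ t) l ∧
        FullyReached (E.filter fun e ↦ ¬ e f ≤ t) r := by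
  unfold FullyReached
  rw [forall_list_bool_iff]
  simp only [reach_nil, reach_node_false, reach_node_true, IsNodePos, subtreeAt]
  refine ⟨And.right, fun h ↦ ⟨fun _ ↦ ?_, h⟩⟩
  exact (FullyReached.nonempty h.1).mono (Finset.filter_subset _ _)

theorem majorityLabeled_leaf_iff {c : Label} :
    MajorityLabeled E lab (.leaf c) ↔ IsMostFrequent E lab c := by
  simp [MajorityLabeled, forall_list_bool_iff, subtreeAt, reach_nil]

theorem majorityLabeled_node_iff {f : ι} {t : ℝ} {l r : DTree ι} :
    MajorityLabeled E lab (.node f t l r) ↔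
      MajorityLabeled (E.filter fun e ↦ e f ≤ t) lab l ∧
        MajorityLabeled (E.filter fun e ↦ ¬ e f ≤ t) lab r := by
  unfold MajorityLabeled
  rw [forall_list_bool_iff]
  simp [subtreeAt, reach_node_false, reach_node_true]

theorem MajorityLabeled.subtreeAt {p : List Bool} {S : DTree ι} (h : MajorityLabeled E lab T)
    (hp : T.subtreeAt p = some S) : MajorityLabeled (reach E T p) lab S := by
  induction p generalizing E T with
  | nil =>
    obtain rfl : T = S := by simpa [DTree.subtreeAt] using hp
    rwa [reach_nil]
  | cons b p ih =>
    cases T with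
    | leaf => simp [DTree.subtreeAt] at hp
    | node f t l r =>
      rw [majorityLabeled_node_iff] at h
      cases b with
      | false => rw [reach_node_false]; exact ih h.1 hp
      | true => rw [reach_node_true]; exact ih h.2 hp

theorem FullyReached.replaceAt {p : List Bool} {S : DTree ι} (hT : FullyReached E T)
    (hS : FullyReached (reach E T p) S) : FullyReached E (T.replaceAt p S) := by
  fun_induction DTree.replaceAt T p S generalizing E with
  | case1 => rwa [reach_nil] at hS
  | case2 => exact hT
  | case3 f t l r p S ih =>
    rw [fullyReached_node_iff] at hT ⊢
    rw [reach_node_true] at hS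
    exact ⟨hT.1, ih hT.2 hS⟩
  | case4 f t l r b p S hb ih =>
    obtain rfl : b = false := by simpa using hb
    rw [fullyReached_node_iff] at hT ⊢
    rw [reach_node_false] at hS
    exact ⟨ih hT.1 hS, hT.2⟩

theorem MajorityLabeled.replaceAt {p : List Bool} {S : DTree ι} (hT : MajorityLabeled E lab T)
    (hS : MajorityLabeled (reach E T p) lab S) : MajorityLabeled E lab (T.replaceAt p S) := by
  fun_induction DTree.replaceAt T p S generalizing E with
  | case1 => rwa [reach_nil] at hS
  | case2 => exact hT
  | case3 f t l r p S ih =>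
    rw [majorityLabeled_node_iff] at hT ⊢
    rw [reach_node_true] at hS
    exact ⟨hT.1, ih hT.2 hS⟩
  | case4 f t l r b p S hb ih =>
    obtain rfl : b = false := by simpa using hb
    rw [majorityLabeled_node_iff] at hT ⊢
    rw [reach_node_false] at hS
    exact ⟨ih hT.1 hS, hT.2⟩

theorem IsMostFrequent.errCount_leaf_le {c : Label} (h : IsMostFrequent E lab c) (c' : Label) :
    errCount (.leaf c) E lab ≤ errCount (.leaf c') E lab := by
  have card_eq (a : Label) :
      (E.filter fun e ↦ lab e = a).card + errCount (.leaf a) E lab = E.card := by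
    simp only [errCount, classify, ne_comm (a := a)]
    exact Finset.card_filter_add_card_filter_not _
  have := h c'
  have := card_eq c
  have := card_eq c'
  omega

theorem errCount_filter_add_errCount_filter_not (T : DTree ι) (E : Finset (ι → ℝ))
    (lab : (ι → ℝ) → Label) (P : (ι → ℝ) → Prop) [DecidablePred P] :
    errCount T (E.filter P) lab + errCount T (E.filter fun e ↦ ¬ P e) lab = errCount T E lab := by
  unfold errCount
  rw [Finset.filter_comm P, Finset.filter_comm fun e ↦ ¬ P e]
  exact Finset.card_filter_add_card_filter_not _

theorem errCount_congr (h : ∀ e ∈ E, T.classify e = T'.classify e) :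
    errCount T E lab = errCount T' E lab := by
  unfold errCount
  rw [Finset.filter_congr fun e he ↦ by rw [h e he]]

theorem errCount_node (E : Finset (ι → ℝ)) (lab : (ι → ℝ) → Label) (f : ι) (t : ℝ)
    (l r : DTree ι) :
    errCount (.node f t l r) E lab =
      errCount l (E.filter fun e ↦ e f ≤ t) lab +
        errCount r (E.filter fun e ↦ ¬ e f ≤ t) lab := by
  rw [← errCount_filter_add_errCount_filter_not _ E lab fun e ↦ e f ≤ t]
  congr 1
  · exact errCount_congr fun e he ↦ if_pos (Finset.mem_filter.1 he).2
  · exact errCount_congr fun e he ↦ if_neg (Finset.mem_filter.1 he).2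

theorem MajorityLabeled.errCount_le_errCount_leaf (h : MajorityLabeled E lab T) (c : Label) :
    errCount T E lab ≤ errCount (.leaf c) E lab := by
  induction T generalizing E with
  | leaf a => exact (majorityLabeled_leaf_iff.1 h).errCount_leaf_le c
  | node f t l r ihl ihr =>
    obtain ⟨hl, hr⟩ := majorityLabeled_node_iff.1 h
    calc errCount (.node f t l r) E lab
        = errCount l (E.filter fun e ↦ e f ≤ t) lab +
            errCount r (E.filter fun e ↦ ¬ e f ≤ t) lab := errCount_node ..
      _ ≤ errCount (.leaf c) (E.filter fun e ↦ e f ≤ t) lab +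
            errCount (.leaf c) (E.filter fun e ↦ ¬ e f ≤ t) lab := add_le_add (ihl hl) (ihr hr)
      _ = errCount (.leaf c) E lab := errCount_filter_add_errCount_filter_not ..

theorem errCount_le_errCount_replaceAt {p : List Bool} {S S' : DTree ι}
    (hp : T.subtreeAt p = some S)
    (h : errCount S (reach E T p) lab ≤ errCount S' (reach E T p) lab) :
    errCount T E lab ≤ errCount (T.replaceAt p S') E lab := by
  fun_induction DTree.replaceAt T p S' generalizing E with
  | case1 T =>
    obtain rfl : T = S := by simpa [subtreeAt] using hp
    rwa [reach_nil] at h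
  | case2 => exact le_rfl
  | case3 f t l r p S' ih =>
    rw [reach_node_true] at h
    rw [errCount_node, errCount_node]
    exact Nat.add_le_add_left (ih hp h) _
  | case4 f t l r b p S' hb ih =>
    obtain rfl : b = false := by simpa using hb
    rw [reach_node_false] at h
    rw [errCount_node, errCount_node]
    exact Nat.add_le_add_right (ih hp h) _

theorem MajorityLabeled.replStep (h : MajorityLabeled E lab T) (hs : ReplStep E lab T T') :
    MajorityLabeled E lab T' := by
  obtain ⟨p, -, rfl⟩ := hs
  exact h.replaceAt (majorityLabeled_leaf_iff.2 (isMostFrequent_majorityLabel _ _))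

theorem MajorityLabeled.errCount_le_of_replStep (h : MajorityLabeled E lab T)
    (hs : ReplStep E lab T T') : errCount T E lab ≤ errCount T' E lab := by
  obtain ⟨p, ⟨_, _, _, _, hp⟩, rfl⟩ := hs
  exact errCount_le_errCount_replaceAt hp ((h.subtreeAt hp).errCount_le_errCount_leaf _)

theorem FullyReached.replStep (h : FullyReached E T) (hs : ReplStep E lab T T') :
    FullyReached E T' := by
  obtain ⟨p, ⟨_, _, _, _, hp⟩, rfl⟩ := hs
  exact h.replaceAt (fullyReached_leaf_iff.2 (h p (Option.isSome_of_eq_some hp)))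

theorem Reasonable.replStep (h : Reasonable E lab T) (hs : ReplStep E lab T T') :
    Reasonable E lab T' :=
  ⟨FullyReached.replStep h.1 hs, MajorityLabeled.replStep h.2 hs⟩

theorem stmt0_general (hs : Relation.ReflTransGen (ReplStep E lab) T T') :
    (Reasonable E lab T → Reasonable E lab T') ∧
      (MajorityLabeled E lab T → errCount T E lab ≤ errCount T' E lab) := by
  induction hs using Relation.ReflTransGen.head_induction_on with
  | refl => exact ⟨id, fun _ ↦ le_rfl⟩
  | head hstep _ ih =>
    exact ⟨fun h ↦ ih.1 (h.replStep hstep),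
      fun h ↦ (h.errCount_le_of_replStep hstep).trans (ih.2 (h.replStep hstep))⟩

end Replacement

/-- If `T` is a reasonable decision tree for the training set
`(E, lab)` and `T'` is obtained from `T` by a single subtree replacement operation,
then `T'` is again reasonable and has at least as many errors as `T`; consequently,
any tree obtained from a reasonable tree by a sequence of subtree replacement
operations has at least as many errors as the original tree. -/
theorem stmt0 {d : ℕ} (E : Finset (Fin d → ℝ)) (lab : (Fin d → ℝ) → Label)
    (T T' : DTree (Fin d)) :
    (Reasonable E lab T → ReplStep E lab T T' →
      Reasonable E lab T' ∧ errCount T E lab ≤ errCount T' E lab)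
    ∧ (Reasonable E lab T → Relation.ReflTransGen (ReplStep E lab) T T' →
      errCount T E lab ≤ errCount T' E lab) :=
  ⟨fun h hs ↦ ⟨(stmt0_general (.single hs)).1 h, (stmt0_general (.single hs)).2 h.2⟩,
    fun h hs ↦ (stmt0_general hs).2 h.2⟩
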